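/- arXiv:2605.27307 — 2 statements merged into one kernel-verified Lean document; each statement's English description precedes it below -/
import Mathlib

section
/- For every integer n ≥ 3, φ(C(n,3)) = n, and the unique triangle family 𝒯 (up to relabeling of vertices) with |𝒯| = C(n,3) and λ(𝒯) = n is the family of all 3-element subsets of an n-element set. Equivalently, the minimum of |𝒯| over all triangle families 𝒯 with λ(𝒯) ≥ n equals C(n,3), and the unique minimizer is the family of all 3-element subsets of an n-element set. -/
open Finset Matrix

/-- The sign `[T : e]` of an edge `e` in a triangle `T`. -/
noncomputable def triSign (T e : Finset ℕ) : ℝ :=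
  if e ⊆ T ∧ e.card = 2 ∧ T.card = 3 then
    if (T \ e).max = T.max ∨ (T \ e).min = T.min then 1 else -1
  else 0

/-- A triangle family: a nonempty finite set of 3-element subsets of ℕ. -/
def IsTriFam (F : Finset (Finset ℕ)) : Prop :=
  F.Nonempty ∧ ∀ T ∈ F, T.card = 3

/-- The edges of the support graph of a triangle family. -/
def edgesOf (F : Finset (Finset ℕ)) : Finset (Finset ℕ) :=
  F.biUnion fun T => T.powersetCard 2

/-- The vertices of the support graph of a triangle family. -/
def vertsOf (F : Finset (Finset ℕ)) : Finset ℕ :=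
  F.biUnion id

/-- The signed edge-triangle incidence matrix of a triangle family. -/
noncomputable def delta1 (F : Finset (Finset ℕ)) :
    Matrix {T // T ∈ F} {e // e ∈ edgesOf F} ℝ :=
  Matrix.of fun T e => triSign T.1 e.1

/-- The smallest positive eigenvalue of a matrix. -/
noncomputable def lambdaMinPos {m : Type*} [Fintype m] (M : Matrix m m ℝ) : ℝ :=
  sInf {μ : ℝ | 0 < μ ∧ ∃ v : m → ℝ, v ≠ 0 ∧ M.mulVec v = μ • v}

/-- `λ(𝒯)`: the smallest positive eigenvalue of `δ₁(𝒯)ᵀ δ₁(𝒯)`. -/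
noncomputable def lam (F : Finset (Finset ℕ)) : ℝ :=
  lambdaMinPos ((delta1 F)ᵀ * delta1 F)

/-- The neighborhood of `x` in the support graph `Γ₀(F)`. -/
def nbrs (F : Finset (Finset ℕ)) (x : ℕ) : Finset ℕ :=
  (vertsOf F).filter fun y => x ≠ y ∧ ∃ T ∈ F, x ∈ T ∧ y ∈ T

/-- `φ(t)`: the maximum of `λ(𝒯)` over triangle families with `|𝒯| = t`. -/
noncomputable def phi (t : ℕ) : ℝ :=
  sSup {r : ℝ | ∃ F : Finset (Finset ℕ), IsTriFam F ∧ F.card = t ∧ lam F = r}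

/-- `Λ(t) = max_{1 ≤ s ≤ t} φ(s)`. -/
noncomputable def Lam (t : ℕ) : ℝ :=
  sSup {r : ℝ | ∃ s : ℕ, 1 ≤ s ∧ s ≤ t ∧ phi s = r}

/-- `H(n) = min{ s ≥ 1 : φ(C(n,3)+s) > n - 1 }`. -/
noncomputable def Hfun (n : ℕ) : ℕ :=
  sInf {s : ℕ | 1 ≤ s ∧ (n : ℝ) - 1 < phi (n.choose 3 + s)}

/-- The triangle family `𝒯_{c,b}`: all 3-cliques of `K_c ∨ (b isolated vertices)`. -/
def Tcb (c b : ℕ) : Finset (Finset ℕ) :=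
  ((Finset.Icc 1 c).powersetCard 3) ∪
    (Finset.Icc (c+1) (c+b)).biUnion
      (fun i => ((Finset.Icc 1 c).powersetCard 2).image (fun p => insert i p))

theorem lambdaMinPos_diag_le {m : Type*} [Fintype m] [DecidableEq m] (A : Matrix m m ℝ)
    (hA : A.PosSemidef) (i : m) : lambdaMinPos A * A i i ≤ (A * A) i i := by
  set U : Matrix m m ℝ := (hA.1.eigenvectorUnitary : Matrix m m ℝ) with hU
  set D : Matrix m m ℝ := diagonal hA.1.eigenvalues with hD
  have h1 : A = U * D * star U := by
    have h := hA.1.spectral_theorem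
    rw [Unitary.conjStarAlgAut_apply] at h
    exact h
  have hUU : star U * U = 1 := Unitary.coe_star_mul_self hA.1.eigenvectorUnitary
  have h2 : A * A = U * (D * D) * star U := by
    calc A * A = (U * D * star U) * (U * D * star U) := by rw [← h1]
      _ = U * D * (star U * U) * D * star U := by simp only [Matrix.mul_assoc]
      _ = _ := by rw [hUU]; simp only [Matrix.mul_assoc, Matrix.one_mul]
  have e1 : A i i = ∑ k, hA.1.eigenvalues k * (U i k) ^ 2 := by
    conv_lhs => rw [h1]
    rw [Matrix.mul_apply]
    refine Finset.sum_congr rfl fun k _ => ?_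
    simp [hD, Matrix.star_apply]; ring
  have e2 : (A * A) i i = ∑ k, hA.1.eigenvalues k ^ 2 * (U i k) ^ 2 := by
    rw [h2, Matrix.mul_apply]
    refine Finset.sum_congr rfl fun k _ => ?_
    simp [hD, Matrix.star_apply]; ring
  rw [e1, e2, Finset.mul_sum]
  refine Finset.sum_le_sum fun k _ => ?_
  have h0 : 0 ≤ hA.1.eigenvalues k := hA.eigenvalues_nonneg k
  rcases h0.eq_or_lt with h | h
  · rw [← h]; simp
  · have : lambdaMinPos A ≤ hA.1.eigenvalues k := by
      refine csInf_le ⟨0, fun x hx => hx.1.le⟩ ⟨h, _, ?_, hA.1.mulVec_eigenvectorBasis k⟩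
      intro h0
      apply hA.1.eigenvectorBasis.toBasis.ne_zero k
      ext j
      simpa using congrFun h0 j
    nlinarith [mul_nonneg h.le (sq_nonneg (U i k))]

theorem gramEntry (F : Finset (Finset ℕ)) (e e' : {e // e ∈ edgesOf F}) :
    ((delta1 F)ᵀ * delta1 F) e e' = ∑ T ∈ F, triSign T e.1 * triSign T e'.1 := by
  rw [Matrix.mul_apply, ← Finset.sum_coe_sort F]
  rfl

theorem triSign_sq (T e : Finset ℕ) :
    triSign T e ^ 2 = if e ⊆ T ∧ e.card = 2 ∧ T.card = 3 then 1 else 0 := by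
  unfold triSign
  split_ifs <;> norm_num

theorem triSign_zero {T e : Finset ℕ} (h : ¬ e ⊆ T) : triSign T e = 0 := by
  unfold triSign
  rw [if_neg (fun h' => h h'.1)]

theorem mem_edgesOf {F : Finset (Finset ℕ)} {e : Finset ℕ} :
    e ∈ edgesOf F ↔ ∃ T ∈ F, e ⊆ T ∧ e.card = 2 := by
  simp [edgesOf, Finset.mem_powersetCard]

/-- two distinct pairs in a triple have the triple as their union -/
theorem union_eq_of_pairs {T e e' : Finset ℕ} (hT : T.card = 3) (he : e ⊆ T) (he' : e' ⊆ T)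
    (hc : e.card = 2) (hc' : e'.card = 2) (hne : e ≠ e') : e ∪ e' = T := by
  apply Finset.eq_of_subset_of_card_le (Finset.union_subset he he')
  by_contra hlt
  have h2 : (e ∪ e').card ≤ 2 := by omega
  have h3 : e = e ∪ e' := Finset.eq_of_subset_of_card_le Finset.subset_union_left (by omega)
  have h4 : e' = e ∪ e' := Finset.eq_of_subset_of_card_le Finset.subset_union_right (by omega)
  exact hne (h3.trans h4.symm)

theorem off_diag_sq {F : Finset (Finset ℕ)} (hF : ∀ T ∈ F, T.card = 3) {e e' : Finset ℕ}
    (hc : e.card = 2) (hc' : e'.card = 2) (hne : e ≠ e') :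
    (∑ T ∈ F, triSign T e * triSign T e') ^ 2 ≤
      ∑ T ∈ F, triSign T e ^ 2 * triSign T e' ^ 2 := by
  have key : ∀ T ∈ F, T ≠ e ∪ e' → triSign T e * triSign T e' = 0 := by
    intro T hT hn
    by_cases h1 : e ⊆ T
    · by_cases h2 : e' ⊆ T
      · exact absurd (union_eq_of_pairs (hF T hT) h1 h2 hc hc' hne).symm hn
      · rw [triSign_zero h2, mul_zero]
    · rw [triSign_zero h1, zero_mul]
  by_cases hm : e ∪ e' ∈ F
  · rw [Finset.sum_eq_single_of_mem _ hm key, mul_pow]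
    exact Finset.single_le_sum (f := fun T => triSign T e ^ 2 * triSign T e' ^ 2)
      (fun T _ => by positivity) hm
  · rw [Finset.sum_eq_zero]
    · simp only [ne_eq, OfNat.ofNat_ne_zero, not_false_eq_true, zero_pow]
      exact Finset.sum_nonneg fun T _ => by positivity
    · intro T hT
      exact key T hT (fun h => hm (h ▸ hT))

theorem sum_triSign_sq_edges {F : Finset (Finset ℕ)} (hF : ∀ T ∈ F, T.card = 3) {T : Finset ℕ}
    (hT : T ∈ F) : ∑ e ∈ edgesOf F, triSign T e ^ 2 = 3 := by
  simp only [triSign_sq]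
  rw [← Finset.sum_filter, Finset.sum_const]
  have : (edgesOf F).filter (fun e => e ⊆ T ∧ e.card = 2 ∧ T.card = 3) = T.powersetCard 2 := by
    ext e
    simp only [Finset.mem_filter, mem_edgesOf, Finset.mem_powersetCard]
    constructor
    · rintro ⟨_, h1, h2, _⟩; exact ⟨h1, h2⟩
    · rintro ⟨h1, h2⟩; exact ⟨⟨T, hT, h1, h2⟩, h1, h2, hF T hT⟩
  rw [this, Finset.card_powersetCard, hF T hT]
  norm_num [Nat.choose]

theorem diag_eq {F : Finset (Finset ℕ)} (hF : ∀ T ∈ F, T.card = 3) {e : Finset ℕ}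
    (hc : e.card = 2) :
    ∑ T ∈ F, triSign T e ^ 2 = ((F.filter (fun T => e ⊆ T)).card : ℝ) := by
  simp only [triSign_sq]
  rw [← Finset.sum_filter, Finset.sum_const, nsmul_eq_mul, mul_one]
  congr 2
  ext T
  simp only [Finset.mem_filter]
  constructor
  · rintro ⟨h1, h2, _⟩; exact ⟨h1, h2⟩
  · rintro ⟨h1, h2⟩; exact ⟨h1, h2, hc, hF T h1⟩

theorem lam_le_deg {F : Finset (Finset ℕ)} (hF : ∀ T ∈ F, T.card = 3) {e : Finset ℕ}
    (he : e ∈ edgesOf F) : lam F ≤ ((F.filter (fun T => e ⊆ T)).card : ℝ) + 2 := by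
  classical
  obtain ⟨T₀, hT₀, heT, hc⟩ := mem_edgesOf.1 he
  set d : ℝ := ((F.filter (fun T => e ⊆ T)).card : ℝ) with hd
  have hpos : 0 < d := by
    rw [hd]; exact_mod_cast Finset.card_pos.2 ⟨T₀, by simp [hT₀, heT]⟩
  have hpsd : ((delta1 F)ᵀ * delta1 F).PosSemidef := by
    simpa using Matrix.posSemidef_conjTranspose_mul_self (delta1 F)
  have h := lambdaMinPos_diag_le _ hpsd ⟨e, he⟩
  have hdiag : ((delta1 F)ᵀ * delta1 F) ⟨e, he⟩ ⟨e, he⟩ = d := by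
    rw [gramEntry, hd, ← diag_eq hF hc]
    exact Finset.sum_congr rfl fun T _ => by ring
  rw [hdiag, Matrix.mul_apply] at h
  have hsum : ∑ j, ((delta1 F)ᵀ * delta1 F) ⟨e, he⟩ j * ((delta1 F)ᵀ * delta1 F) j ⟨e, he⟩
      = ∑ e' ∈ edgesOf F, (∑ T ∈ F, triSign T e * triSign T e') ^ 2 := by
    rw [← Finset.sum_coe_sort (edgesOf F)]
    refine Finset.sum_congr rfl fun j _ => ?_
    rw [gramEntry, gramEntry, sq]
    congr 1
    exact Finset.sum_congr rfl fun T _ => mul_comm _ _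
  rw [hsum, ← Finset.add_sum_erase _ _ he] at h
  have hd1 : (∑ T ∈ F, triSign T e * triSign T e) = d := by
    rw [hd, ← diag_eq hF hc]
    exact Finset.sum_congr rfl fun T _ => by ring
  have hs4 : ∀ T : Finset ℕ, triSign T e ^ 2 * triSign T e ^ 2 = triSign T e ^ 2 := by
    intro T; rw [triSign_sq]; split_ifs <;> norm_num
  have hoff : ∑ e' ∈ (edgesOf F).erase e, (∑ T ∈ F, triSign T e * triSign T e') ^ 2 ≤ 2 * d := by
    calc _ ≤ ∑ e' ∈ (edgesOf F).erase e, ∑ T ∈ F, triSign T e ^ 2 * triSign T e' ^ 2 := by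
          refine Finset.sum_le_sum fun e' he' => ?_
          obtain ⟨hne, hm⟩ := Finset.mem_erase.1 he'
          obtain ⟨_, _, _, hc'⟩ := mem_edgesOf.1 hm
          exact off_diag_sq hF hc hc' hne.symm
      _ = ∑ T ∈ F, triSign T e ^ 2 * ∑ e' ∈ (edgesOf F).erase e, triSign T e' ^ 2 := by
          rw [Finset.sum_comm]
          exact Finset.sum_congr rfl fun T _ => by rw [Finset.mul_sum]
      _ = ∑ T ∈ F, 2 * triSign T e ^ 2 := by
          refine Finset.sum_congr rfl fun T hT => ?_
          have h3 := sum_triSign_sq_edges hF hT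
          rw [← Finset.add_sum_erase _ _ he] at h3
          have h5 : ∑ e' ∈ (edgesOf F).erase e, triSign T e' ^ 2 = 3 - triSign T e ^ 2 := by
            linarith
          rw [h5, mul_sub, hs4]; ring
      _ = 2 * d := by rw [← Finset.mul_sum, diag_eq hF hc]
  rw [hd1] at h
  have h6 : lam F * d ≤ (d + 2) * d := by
    unfold lam; nlinarith
  exact le_of_mul_le_mul_right h6 hpos

theorem comb_bound {F : Finset (Finset ℕ)} (hF : IsTriFam F) (k : ℕ)
    (hdeg : ∀ e ∈ edgesOf F, k + 1 ≤ (F.filter (fun T => e ⊆ T)).card) :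
    k + 3 ≤ (vertsOf F).card ∧
      (vertsOf F).card * ((k + 2) * (k + 1)) ≤ 6 * F.card := by
  classical
  obtain ⟨hne, h3⟩ := hF
  have hTV : ∀ T ∈ F, T ⊆ vertsOf F := by
    intro T hT x hx
    simp only [vertsOf, Finset.mem_biUnion, id]
    exact ⟨T, hT, hx⟩
  have hEV : edgesOf F ⊆ (vertsOf F).powersetCard 2 := by
    intro e he
    obtain ⟨T, hT, heT, hc⟩ := mem_edgesOf.1 he
    exact Finset.mem_powersetCard.2 ⟨heT.trans (hTV T hT), hc⟩
  -- every vertex lies on at least `k + 2` edges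
  have hvd : ∀ x ∈ vertsOf F, k + 2 ≤ ((edgesOf F).filter (fun e => x ∈ e)).card := by
    intro x hx
    simp only [vertsOf, Finset.mem_biUnion, id] at hx
    obtain ⟨T, hT, hxT⟩ := hx
    obtain ⟨y, hyT, hyx⟩ := Finset.exists_mem_ne (by rw [h3 T hT]; norm_num) x
    have he : ({x, y} : Finset ℕ) ∈ edgesOf F :=
      mem_edgesOf.2 ⟨T, hT, by simp [Finset.insert_subset_iff, hxT, hyT],
        Finset.card_pair hyx.symm⟩
    have hd := hdeg _ he
    set G := F.filter (fun T => ({x, y} : Finset ℕ) ⊆ T) with hG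
    have hGm : ∀ T ∈ G, T ∈ F ∧ x ∈ T ∧ y ∈ T := by
      intro T hT
      rw [hG, Finset.mem_filter] at hT
      exact ⟨hT.1, hT.2 (by simp), hT.2 (by simp)⟩
    have hinj : (G.image (fun T => T.erase y)).card = G.card := by
      apply Finset.card_image_of_injOn
      intro T hT T' hT' h
      have h' : T.erase y = T'.erase y := h
      rw [← Finset.insert_erase (hGm T hT).2.2, h', Finset.insert_erase (hGm T' hT').2.2]
    have hnot : ({x, y} : Finset ℕ) ∉ G.image (fun T => T.erase y) := by
      intro h
      obtain ⟨T', _, h⟩ := Finset.mem_image.1 h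
      have : y ∈ T'.erase y := by rw [h]; simp
      simp at this
    have hsub : insert ({x, y} : Finset ℕ) (G.image (fun T => T.erase y)) ⊆
        (edgesOf F).filter (fun e => x ∈ e) := by
      intro e h
      rcases Finset.mem_insert.1 h with rfl | h
      · simp [he]
      · obtain ⟨T', hT', rfl⟩ := Finset.mem_image.1 h
        obtain ⟨a, b, c⟩ := hGm T' hT'
        refine Finset.mem_filter.2 ⟨mem_edgesOf.2 ⟨T', a, Finset.erase_subset _ _, ?_⟩, ?_⟩
        · rw [Finset.card_erase_of_mem c, h3 T' a]
        · exact Finset.mem_erase.2 ⟨hyx.symm, b⟩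
    have := Finset.card_le_card hsub
    rw [Finset.card_insert_of_notMem hnot, hinj] at this
    omega
  have hdc1 : ∑ x ∈ vertsOf F, ((edgesOf F).filter (fun e => x ∈ e)).card
      = 2 * (edgesOf F).card := by
    have := Finset.sum_card_bipartiteAbove_eq_sum_card_bipartiteBelow
      (s := vertsOf F) (t := edgesOf F) (fun x e => x ∈ e)
    simp only [Finset.bipartiteAbove, Finset.bipartiteBelow] at this
    rw [this, Finset.sum_congr rfl (g := fun _ => 2)]
    · simp [mul_comm]
    · intro e he
      obtain ⟨h1, h2⟩ := Finset.mem_powersetCard.1 (hEV he)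
      rw [Finset.filter_mem_eq_inter, Finset.inter_eq_right.2 h1, h2]
  have hdc2 : ∑ e ∈ edgesOf F, (F.filter (fun T => e ⊆ T)).card = 3 * F.card := by
    have := Finset.sum_card_bipartiteAbove_eq_sum_card_bipartiteBelow
      (s := edgesOf F) (t := F) (fun e T => e ⊆ T)
    simp only [Finset.bipartiteAbove, Finset.bipartiteBelow] at this
    rw [this, Finset.sum_congr rfl (g := fun _ => 3)]
    · simp [mul_comm]
    · intro T hT
      have : (edgesOf F).filter (fun e => e ⊆ T) = T.powersetCard 2 := by
        ext e
        simp only [Finset.mem_filter, mem_edgesOf, Finset.mem_powersetCard]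
        constructor
        · rintro ⟨⟨_, _, _, h⟩, h1⟩; exact ⟨h1, h⟩
        · rintro ⟨h1, h2⟩; exact ⟨⟨T, hT, h1, h2⟩, h1⟩
      rw [this, Finset.card_powersetCard, h3 T hT]
      rfl
  have hb1 : (vertsOf F).card * (k + 2) ≤ 2 * (edgesOf F).card := by
    rw [← hdc1, ← smul_eq_mul]
    exact Finset.card_nsmul_le_sum _ _ _ hvd
  have hb2 : (edgesOf F).card * (k + 1) ≤ 3 * F.card := by
    rw [← hdc2, ← smul_eq_mul]
    exact Finset.card_nsmul_le_sum _ _ _ hdeg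
  have hVpos : 0 < (vertsOf F).card := by
    obtain ⟨T, hT⟩ := hne
    have := Finset.card_le_card (hTV T hT)
    rw [h3 T hT] at this
    omega
  have hE := Finset.card_le_card hEV
  rw [Finset.card_powersetCard] at hE
  constructor
  · obtain ⟨v, hv⟩ : ∃ v, (vertsOf F).card = v + 1 := ⟨_, (Nat.succ_pred_eq_of_pos hVpos).symm⟩
    rw [hv] at hE hb1 ⊢
    have h2 : 2 * (v + 1).choose 2 = (v + 1) * v := by
      have := Nat.add_one_mul_choose_eq v 1
      simp at this; omega
    have : (v + 1) * (k + 2) ≤ (v + 1) * v := by omega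
    have := Nat.le_of_mul_le_mul_left this (Nat.succ_pos v)
    omega
  · nlinarith

theorem six_choose (k : ℕ) : 6 * (k + 3).choose 3 = (k + 3) * ((k + 2) * (k + 1)) := by
  have := Nat.descFactorial_eq_factorial_mul_choose (k + 3) 3
  simp [Nat.descFactorial, Nat.factorial] at this
  rw [← this]; ring

theorem main_bound {F : Finset (Finset ℕ)} (hF : IsTriFam F) (k : ℕ)
    (hl : ((k + 3 : ℕ) : ℝ) ≤ lam F) :
    (k + 3).choose 3 ≤ F.card ∧ (F.card = (k + 3).choose 3 →
      ∃ S : Finset ℕ, S.card = k + 3 ∧ F = S.powersetCard 3) := by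
  have hdeg : ∀ e ∈ edgesOf F, k + 1 ≤ (F.filter (fun T => e ⊆ T)).card := by
    intro e he
    have := hl.trans (lam_le_deg hF.2 he)
    have h2 : k + 3 ≤ (F.filter (fun T => e ⊆ T)).card + 2 := by exact_mod_cast this
    omega
  obtain ⟨h1, h2⟩ := comb_bound hF k hdeg
  have h6 := six_choose k
  constructor
  · have := Nat.mul_le_mul_right ((k + 2) * (k + 1)) h1
    omega
  · intro hc
    rw [hc, h6] at h2
    have h3 := Nat.le_of_mul_le_mul_right h2 (by positivity)
    have h4 : (vertsOf F).card = k + 3 := le_antisymm h3 h1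
    refine ⟨vertsOf F, h4, Finset.eq_of_subset_of_card_le ?_ ?_⟩
    · intro T hT
      refine Finset.mem_powersetCard.2 ⟨?_, hF.2 T hT⟩
      intro x hx
      simp only [vertsOf, Finset.mem_biUnion, id]
      exact ⟨T, hT, hx⟩
    · rw [Finset.card_powersetCard, h4, hc]

/-- the sign of a vertex in an edge -/
noncomputable def vSign (e : Finset ℕ) (x : ℕ) : ℝ :=
  if x ∈ e then (if ∀ y ∈ e, y ≤ x then 1 else -1) else 0

theorem exists_sorted {T : Finset ℕ} (hT : T.card = 3) :
    ∃ a b c, a < b ∧ b < c ∧ T = {a, b, c} := by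
  obtain ⟨x, y, z, hxy, hxz, hyz, rfl⟩ := Finset.card_eq_three.1 hT
  have hp : ∀ p q r : ℕ, p < q → q < r → ({x, y, z} : Finset ℕ) = {p, q, r} →
    ∃ a b c, a < b ∧ b < c ∧ ({x, y, z} : Finset ℕ) = {a, b, c} :=
    fun p q r h1 h2 h3 => ⟨p, q, r, h1, h2, h3⟩
  rcases lt_or_gt_of_ne hxy with h1 | h1 <;> rcases lt_or_gt_of_ne hxz with h2 | h2 <;>
    rcases lt_or_gt_of_ne hyz with h3 | h3
  · exact hp x y z h1 h3 rfl
  · exact hp x z y h2 h3 (by ext; simp; tauto)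
  · omega
  · exact hp z x y h2 h1 (by ext; simp; tauto)
  · exact hp y x z h1 h2 (by ext; simp; tauto)
  · omega
  · exact hp y z x h3 h2 (by ext; simp; tauto)
  · exact hp z y x h3 h1 (by ext; simp; tauto)

theorem sub_triple {e : Finset ℕ} {a b c : ℕ} (hab : a < b) (hbc : b < c)
    (he : e ⊆ {a, b, c}) (hc : e.card = 2) : e = {a, b} ∨ e = {a, c} ∨ e = {b, c} := by
  obtain ⟨x, y, hxy, rfl⟩ := Finset.card_eq_two.1 hc
  have hx : x ∈ ({a, b, c} : Finset ℕ) := he (by simp)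
  have hy : y ∈ ({a, b, c} : Finset ℕ) := he (by simp)
  simp only [Finset.mem_insert, Finset.mem_singleton] at hx hy
  rcases hx with rfl | rfl | rfl <;> rcases hy with rfl | rfl | rfl <;>
    first
    | exact absurd rfl hxy
    | exact Or.inl rfl
    | exact Or.inr (Or.inl rfl)
    | exact Or.inr (Or.inr rfl)
    | exact Or.inl (Finset.pair_comm _ _)
    | exact Or.inr (Or.inl (Finset.pair_comm _ _))
    | exact Or.inr (Or.inr (Finset.pair_comm _ _))

theorem card_abc {a b c : ℕ} (hab : a < b) (hbc : b < c) :
    ({a, b, c} : Finset ℕ).card = 3 := by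
  rw [Finset.card_eq_three]; exact ⟨a, b, c, by omega, by omega, by omega, rfl⟩

theorem max_abc {a b c : ℕ} (hab : a < b) (hbc : b < c) :
    ({a, b, c} : Finset ℕ).max = WithBot.some c := by
  rw [Finset.max_insert, Finset.max_insert, Finset.max_singleton,
    max_eq_right (WithBot.coe_le_coe.2 hbc.le),
    max_eq_right (WithBot.coe_le_coe.2 (hab.trans hbc).le)]

theorem min_abc {a b c : ℕ} (hab : a < b) (hbc : b < c) :
    ({a, b, c} : Finset ℕ).min = WithTop.some a := by
  rw [Finset.min_insert, Finset.min_insert, Finset.min_singleton,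
    min_eq_left (WithTop.coe_le_coe.2 hbc.le), min_eq_left (WithTop.coe_le_coe.2 hab.le)]

theorem triSign_ab {a b c : ℕ} (hab : a < b) (hbc : b < c) :
    triSign {a, b, c} {a, b} = 1 := by
  unfold triSign
  have h : ({a, b, c} : Finset ℕ) \ {a, b} = {c} := by ext x; simp; omega
  rw [if_pos ⟨by intro x; simp; omega, Finset.card_pair hab.ne, card_abc hab hbc⟩, h,
    max_abc hab hbc, min_abc hab hbc, if_pos]
  left; exact Finset.max_singleton

theorem triSign_bc {a b c : ℕ} (hab : a < b) (hbc : b < c) :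
    triSign {a, b, c} {b, c} = 1 := by
  unfold triSign
  have h : ({a, b, c} : Finset ℕ) \ {b, c} = {a} := by ext x; simp; omega
  rw [if_pos ⟨by intro x; simp; omega, Finset.card_pair hbc.ne, card_abc hab hbc⟩, h,
    max_abc hab hbc, min_abc hab hbc, if_pos]
  right; exact Finset.min_singleton

theorem triSign_ac {a b c : ℕ} (hab : a < b) (hbc : b < c) :
    triSign {a, b, c} {a, c} = -1 := by
  unfold triSign
  have h : ({a, b, c} : Finset ℕ) \ {a, c} = {b} := by ext x; simp; omega
  rw [if_pos ⟨by intro x; simp; omega, Finset.card_pair (hab.trans hbc).ne, card_abc hab hbc⟩, h,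
    max_abc hab hbc, min_abc hab hbc, if_neg]
  simp only [Finset.max_singleton, Finset.min_singleton, not_or]
  constructor
  · intro h; have := WithBot.coe_injective h; omega
  · intro h; have := WithTop.coe_injective h; omega

theorem vSign_left {a b : ℕ} (h : a < b) : vSign {a, b} a = -1 := by
  unfold vSign
  rw [if_pos (by simp), if_neg (by simp; omega)]

theorem vSign_right {a b : ℕ} (h : a < b) : vSign {a, b} b = 1 := by
  unfold vSign
  rw [if_pos (by simp), if_pos (by simp; omega)]

theorem vSign_zero {e : Finset ℕ} {x : ℕ} (h : x ∉ e) : vSign e x = 0 := if_neg h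

theorem vSign_sq (e : Finset ℕ) (x : ℕ) : vSign e x * vSign e x = if x ∈ e then 1 else 0 := by
  unfold vSign; split_ifs <;> norm_num

theorem sign_rel {T e e' : Finset ℕ} {x : ℕ} (hT : T.card = 3) (he : e ⊆ T) (he' : e' ⊆ T)
    (hc : e.card = 2) (hc' : e'.card = 2) (hne : e ≠ e') (hx : x ∈ e) (hx' : x ∈ e') :
    triSign T e * triSign T e' + vSign e x * vSign e' x = 0 := by
  obtain ⟨a, b, c, hab, hbc, rfl⟩ := exists_sorted hT
  have hac := hab.trans hbc
  rcases sub_triple hab hbc he hc with rfl | rfl | rfl <;>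
  rcases sub_triple hab hbc he' hc' with rfl | rfl | rfl <;>
  simp only [Finset.mem_insert, Finset.mem_singleton] at hx hx' <;>
  rcases hx with h1 | h1 <;> rcases hx' with h2 | h2 <;>
  first
  | exact absurd rfl hne
  | omega
  | (subst h1; simp only [triSign_ab hab hbc, triSign_bc hab hbc, triSign_ac hab hbc, vSign_left hab,
      vSign_left hbc, vSign_left hac, vSign_right hab, vSign_right hbc, vSign_right hac]; norm_num)

/-- the composite of the two coboundary maps is zero -/
theorem dd_zero {T : Finset ℕ} (hT : T.card = 3) (x : ℕ) :
    ∑ e ∈ T.powersetCard 2, triSign T e * vSign e x = 0 := by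
  obtain ⟨a, b, c, hab, hbc, rfl⟩ := exists_sorted hT
  have hac := hab.trans hbc
  have hp : ({a, b, c} : Finset ℕ).powersetCard 2 = {{a, b}, {a, c}, {b, c}} := by
    ext e
    simp only [Finset.mem_powersetCard, Finset.mem_insert, Finset.mem_singleton]
    constructor
    · rintro ⟨h1, h2⟩; exact sub_triple hab hbc h1 h2
    · rintro (rfl | rfl | rfl)
      · exact ⟨by intro x; simp; omega, Finset.card_pair hab.ne⟩
      · exact ⟨by intro x; simp; omega, Finset.card_pair hac.ne⟩
      · exact ⟨by intro x; simp; omega, Finset.card_pair hbc.ne⟩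
  have n1 : ({a, b} : Finset ℕ) ∉ ({{a, c}, {b, c}} : Finset (Finset ℕ)) := by
    simp only [Finset.mem_insert, Finset.mem_singleton, not_or]
    constructor <;> intro h
    · have : b ∈ ({a, c} : Finset ℕ) := by rw [← h]; simp
      simp at this; omega
    · have : a ∈ ({b, c} : Finset ℕ) := by rw [← h]; simp
      simp at this; omega
  have n2 : ({a, c} : Finset ℕ) ≠ {b, c} := by
    intro h
    have : a ∈ ({b, c} : Finset ℕ) := by rw [← h]; simp
    simp at this; omega
  rw [hp, Finset.sum_insert n1, Finset.sum_pair n2, triSign_ab hab hbc, triSign_ac hab hbc,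
    triSign_bc hab hbc]
  by_cases ha : x = a
  · subst ha
    rw [vSign_left hab, vSign_left hac, vSign_zero (by simp; omega)]; norm_num
  by_cases hb : x = b
  · subst hb
    rw [vSign_right hab, vSign_left hbc, vSign_zero (by simp; omega)]; norm_num
  by_cases hc : x = c
  · subst hc
    rw [vSign_right hac, vSign_right hbc, vSign_zero (by simp; omega)]; norm_num
  rw [vSign_zero (by simp; omega), vSign_zero (by simp; omega), vSign_zero (by simp; omega)]
  norm_num

theorem deg_complete {S e : Finset ℕ} (he : e ⊆ S) (hc : e.card = 2) :
    ((S.powersetCard 3).filter (fun T => e ⊆ T)).card + 2 = S.card := by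
  have h : ((S.powersetCard 3).filter (fun T => e ⊆ T)) = (S \ e).image (fun x => insert x e) := by
    ext T
    simp only [Finset.mem_filter, Finset.mem_powersetCard, Finset.mem_image, Finset.mem_sdiff]
    constructor
    · rintro ⟨⟨h1, h2⟩, h3⟩
      have : (T \ e).card = 1 := by rw [Finset.card_sdiff_of_subset h3, h2, hc]
      obtain ⟨x, hx⟩ := Finset.card_eq_one.1 this
      have hx' : x ∈ T \ e := by rw [hx]; simp
      rw [Finset.mem_sdiff] at hx'
      refine ⟨x, ⟨h1 hx'.1, hx'.2⟩, ?_⟩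
      rw [Finset.insert_eq, ← hx, Finset.sdiff_union_of_subset h3]
    · rintro ⟨x, ⟨h1, h2⟩, rfl⟩
      exact ⟨⟨Finset.insert_subset h1 he, by rw [Finset.card_insert_of_notMem h2, hc]⟩,
        Finset.subset_insert _ _⟩
  rw [h, Finset.card_image_of_injOn, Finset.card_sdiff_of_subset he, hc]
  · have := Finset.card_le_card he
    omega
  · intro x hx y hy hxy
    have hxy' : insert x e = insert y e := hxy
    have h1 : x ∈ insert y e := by rw [← hxy']; simp
    rcases Finset.mem_insert.1 h1 with h | h
    · exact h
    · simp only [Finset.coe_sdiff, Set.mem_diff, Finset.mem_coe] at hx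
      exact absurd h hx.2

/-- the Hodge identity on a complete complex -/
theorem hodge {S e e' : Finset ℕ} (he : e ⊆ S) (he' : e' ⊆ S) (hc : e.card = 2)
    (hc' : e'.card = 2) :
    ∑ T ∈ S.powersetCard 3, triSign T e * triSign T e' + ∑ x ∈ S, vSign e x * vSign e' x
      = if e = e' then (S.card : ℝ) else 0 := by
  split_ifs with h
  · subst h
    have h1 := diag_eq (F := S.powersetCard 3) (fun T hT => (Finset.mem_powersetCard.1 hT).2) hc
    simp only [sq] at h1
    rw [h1]
    simp only [vSign_sq]
    rw [Finset.sum_boole, Finset.filter_mem_eq_inter, Finset.inter_eq_right.2 he, hc,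
      ← deg_complete he hc]
    push_cast; ring
  · by_cases hd : Disjoint e e'
    · rw [Finset.sum_eq_zero, Finset.sum_eq_zero, add_zero]
      · intro x _
        by_cases hx : x ∈ e
        · rw [vSign_zero (Finset.disjoint_left.1 hd hx), mul_zero]
        · rw [vSign_zero hx, zero_mul]
      · intro T hT
        by_cases h1 : e ⊆ T
        · rw [triSign_zero (T := T) (e := e'), mul_zero]
          intro h2
          have h3 := Finset.card_le_card (Finset.union_subset h1 h2)
          rw [Finset.card_union_of_disjoint hd, hc, hc', (Finset.mem_powersetCard.1 hT).2] at h3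
          omega
        · rw [triSign_zero h1, zero_mul]
    · obtain ⟨x, hx, hx'⟩ := Finset.not_disjoint_iff.1 hd
      have hcu := Finset.card_union_add_card_inter e e'
      have hi : (e ∩ e').card = 1 := by
        have h1 : 0 < (e ∩ e').card := Finset.card_pos.2 ⟨x, by simp [hx, hx']⟩
        by_contra h2
        have h3 : e ∩ e' = e := Finset.eq_of_subset_of_card_le Finset.inter_subset_left (by omega)
        have h4 : e ∩ e' = e' := Finset.eq_of_subset_of_card_le Finset.inter_subset_right (by omega)
        exact h (h3.symm.trans h4)
      have hu : (e ∪ e').card = 3 := by omega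
      rw [Finset.sum_eq_single_of_mem (e ∪ e')
        (Finset.mem_powersetCard.2 ⟨Finset.union_subset he he', hu⟩),
        Finset.sum_eq_single_of_mem x (he hx)]
      · exact sign_rel hu Finset.subset_union_left Finset.subset_union_right hc hc' h hx hx'
      · intro y _ hy
        by_cases h1 : y ∈ e
        · by_cases h2 : y ∈ e'
          · obtain ⟨z, hz⟩ := Finset.card_eq_one.1 hi
            have a1 : x ∈ e ∩ e' := by simp [hx, hx']
            have a2 : y ∈ e ∩ e' := by simp [h1, h2]
            rw [hz, Finset.mem_singleton] at a1 a2
            exact absurd (a2.trans a1.symm) hy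
          · rw [vSign_zero h2, mul_zero]
        · rw [vSign_zero h1, zero_mul]
      · intro T hT hn
        by_cases h1 : e ⊆ T
        · by_cases h2 : e' ⊆ T
          · exact absurd
              (union_eq_of_pairs (Finset.mem_powersetCard.1 hT).2 h1 h2 hc hc' h).symm hn
          · rw [triSign_zero h2, mul_zero]
        · rw [triSign_zero h1, zero_mul]

theorem lam_complete {S : Finset ℕ} (hS : 3 ≤ S.card) :
    lam (S.powersetCard 3) = (S.card : ℝ) := by
  classical
  set F := S.powersetCard 3 with hFdef
  have hF3 : ∀ T ∈ F, T.card = 3 := fun T hT => (Finset.mem_powersetCard.1 hT).2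
  have hE : ∀ e ∈ edgesOf F, e ⊆ S ∧ e.card = 2 := by
    intro e he
    obtain ⟨T, hT, h1, h2⟩ := mem_edgesOf.1 he
    exact ⟨h1.trans (Finset.mem_powersetCard.1 hT).1, h2⟩
  set A := (delta1 F)ᵀ * delta1 F with hA
  set D : Matrix {e // e ∈ edgesOf F} {x // x ∈ S} ℝ := Matrix.of fun e x => vSign e.1 x.1 with hD
  have hsum : A + D * Dᵀ = (S.card : ℝ) • (1 : Matrix _ _ ℝ) := by
    ext e e'
    have := hodge (hE _ e.2).1 (hE _ e'.2).1 (hE _ e.2).2 (hE _ e'.2).2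
    rw [Matrix.add_apply, hA, gramEntry, Matrix.smul_apply, Matrix.one_apply, Matrix.mul_apply]
    have h2 : ∑ j, D e j * Dᵀ j e' = ∑ x ∈ S, vSign e.1 x * vSign e'.1 x := by
      rw [← Finset.sum_coe_sort S]; rfl
    rw [h2, this]
    by_cases h : e = e'
    · rw [if_pos h, if_pos (congrArg Subtype.val h), smul_eq_mul, mul_one]
    · rw [if_neg h, if_neg (fun h' => h (Subtype.ext h')), smul_zero]
  have hdd : delta1 F * D = 0 := by
    ext T x
    rw [Matrix.mul_apply]
    have h2 : ∑ j, delta1 F T j * D j x = ∑ e ∈ edgesOf F, triSign T.1 e * vSign e x.1 := by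
      rw [← Finset.sum_coe_sort (edgesOf F)]; rfl
    rw [h2, Matrix.zero_apply, ← dd_zero (hF3 _ T.2) x.1]
    symm
    apply Finset.sum_subset
    · intro e he
      obtain ⟨h1, h2⟩ := Finset.mem_powersetCard.1 he
      exact mem_edgesOf.2 ⟨T.1, T.2, h1, h2⟩
    · intro e he hn
      rw [triSign_zero, zero_mul]
      intro h
      exact hn (Finset.mem_powersetCard.2 ⟨h, (hE e he).2⟩)
  have hAD : A * D = 0 := by rw [hA, Matrix.mul_assoc, hdd, Matrix.mul_zero]
  have hAA : A * A = (S.card : ℝ) • A := by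
    have h1 : A * (A + D * Dᵀ) = A * ((S.card : ℝ) • (1 : Matrix _ _ ℝ)) := by rw [hsum]
    rw [Matrix.mul_add, ← Matrix.mul_assoc A D, hAD, Matrix.zero_mul, add_zero,
      Matrix.mul_smul, Matrix.mul_one] at h1
    exact h1
  obtain ⟨T, hTS, hT3⟩ := Finset.exists_subset_card_eq hS
  obtain ⟨e, heT, hc⟩ := Finset.exists_subset_card_eq (s := T) (n := 2) (by omega)
  have hTF : T ∈ F := Finset.mem_powersetCard.2 ⟨hTS, hT3⟩
  have heE : e ∈ edgesOf F := mem_edgesOf.2 ⟨T, hTF, heT, hc⟩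
  have hAe : A ⟨e, heE⟩ ⟨e, heE⟩ ≠ 0 := by
    rw [hA, gramEntry]
    have h1 := diag_eq hF3 hc
    simp only [sq] at h1
    rw [h1]
    exact_mod_cast (Finset.card_pos.2 ⟨T, by simp [hTF, heT]⟩).ne'
  have hset : {μ : ℝ | 0 < μ ∧ ∃ v : {e // e ∈ edgesOf F} → ℝ, v ≠ 0 ∧ A.mulVec v = μ • v}
      = {(S.card : ℝ)} := by
    ext μ
    simp only [Set.mem_setOf_eq, Set.mem_singleton_iff]
    constructor
    · rintro ⟨hμ, v, hv, hAv⟩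
      have h1 : A.mulVec (A.mulVec v) = (S.card : ℝ) • A.mulVec v := by
        rw [Matrix.mulVec_mulVec, hAA, Matrix.smul_mulVec]
      rw [hAv, Matrix.mulVec_smul, hAv] at h1
      have h2 := smul_left_injective ℝ (smul_ne_zero hμ.ne' hv)
      exact h2 h1
    · rintro rfl
      refine ⟨by exact_mod_cast (by omega), A.mulVec (Pi.single ⟨e, heE⟩ 1), ?_, ?_⟩
      · intro h
        have := congrFun h ⟨e, heE⟩
        simp at this
        exact hAe this
      · rw [Matrix.mulVec_mulVec, hAA, Matrix.smul_mulVec]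
  unfold lam lambdaMinPos
  rw [hset, csInf_singleton]

/-- `φ(C(n,3)) = n`, with the full triangle family of an `n`-set as unique (up to
relabeling) extremizer; equivalently, `C(n,3)` is the least size of a triangle
family with `λ(𝒯) ≥ n`, with the same unique minimizer. -/
theorem stmt7 (n : ℕ) (hn : 3 ≤ n) :
    phi (n.choose 3) = (n : ℝ) ∧
    (∀ F : Finset (Finset ℕ), IsTriFam F → F.card = n.choose 3 → lam F = (n : ℝ) →
      ∃ S : Finset ℕ, S.card = n ∧ F = S.powersetCard 3) ∧
    IsLeast {t : ℕ | ∃ F : Finset (Finset ℕ), IsTriFam F ∧ F.card = t ∧ (n : ℝ) ≤ lam F}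
      (n.choose 3) ∧
    (∀ F : Finset (Finset ℕ), IsTriFam F → F.card = n.choose 3 → (n : ℝ) ≤ lam F →
      ∃ S : Finset ℕ, S.card = n ∧ F = S.powersetCard 3) := by
  obtain ⟨k, rfl⟩ : ∃ k, n = k + 3 := ⟨n - 3, by omega⟩
  have hmin : ∀ F : Finset (Finset ℕ), IsTriFam F → F.card = (k + 3).choose 3 →
      ((k + 3 : ℕ) : ℝ) ≤ lam F → ∃ S : Finset ℕ, S.card = k + 3 ∧ F = S.powersetCard 3 :=
    fun F hF hc hl => (main_bound hF k hl).2 hc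
  have hex : IsTriFam ((Finset.range (k + 3)).powersetCard 3) ∧
      ((Finset.range (k + 3)).powersetCard 3).card = (k + 3).choose 3 ∧
      lam ((Finset.range (k + 3)).powersetCard 3) = ((k + 3 : ℕ) : ℝ) := by
    refine ⟨⟨?_, fun T hT => (Finset.mem_powersetCard.1 hT).2⟩, ?_, ?_⟩
    · exact Finset.powersetCard_nonempty.2 (by simp)
    · simp
    · rw [lam_complete (by simp), Finset.card_range]
  refine ⟨?_, fun F hF hc hl => hmin F hF hc hl.ge, ⟨⟨_, hex.1, hex.2.1, hex.2.2.ge⟩, ?_⟩, hmin⟩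
  · have hg : IsGreatest {r : ℝ | ∃ F : Finset (Finset ℕ), IsTriFam F ∧
        F.card = (k + 3).choose 3 ∧ lam F = r} ((k + 3 : ℕ) : ℝ) := by
      refine ⟨⟨_, hex⟩, ?_⟩
      rintro r ⟨F, hF, hc, rfl⟩
      by_contra hlt
      obtain ⟨S, hS, rfl⟩ := hmin F hF hc (not_le.1 hlt).le
      apply hlt
      rw [lam_complete (by omega), hS]
    exact hg.csSup_eq
  · rintro t ⟨F, hF, rfl, hl⟩
    exact (main_bound hF k hl).1
end

section
/- There exists N such that for every integer n ≥ N, n²/6 − 5n/(2√3) + 3 < H(n) ≤ C(n,2). In particular, H(n) = Θ(C(n+1,3) − C(n,3)) = Θ(n²). -/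
open Finset Matrix

noncomputable def dg (F : Finset (Finset ℕ)) (e : Finset ℕ) : ℕ := (F.filter (fun T => e ⊆ T)).card

theorem posEig_ge {m : Type*} [Fintype m] (M : Matrix m m ℝ) (μ : ℝ) (h : 0 < μ)
    (v : m → ℝ) (hv : v ≠ 0) (hM : M.mulVec v = μ • v) : lambdaMinPos M ≤ μ :=
  csInf_le ⟨0, fun _ hx => hx.1.le⟩ ⟨h, v, hv, hM⟩

theorem psd_key {m : Type*} [Fintype m] [DecidableEq m] (M : Matrix m m ℝ) (hM : M.PosSemidef)
    (i : m) : lambdaMinPos M * M i i ≤ ∑ j, M i j * M j i := by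
  have hH := hM.isHermitian
  set U := (hH.eigenvectorUnitary : Matrix m m ℝ) with hU
  have hUU : star U * U = 1 := by simp [hU]
  have hs : M = U * diagonal hH.eigenvalues * star U := by
    have := hH.spectral_theorem
    simpa [Unitary.conjStarAlgAut_apply] using this
  have hs2 : M * M = U * diagonal (fun k => hH.eigenvalues k * hH.eigenvalues k) * star U := by
    conv_lhs => rw [hs]
    rw [← diagonal_mul_diagonal]
    calc _ = U * diagonal hH.eigenvalues * (star U * U) * diagonal hH.eigenvalues * star U := by
          simp only [Matrix.mul_assoc]
      _ = _ := by rw [hUU]; simp only [Matrix.mul_assoc, Matrix.mul_one]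
  have ent : ∀ d : m → ℝ, (U * diagonal d * star U) i i = ∑ k, d k * (U i k) ^ 2 := by
    intro d
    rw [Matrix.mul_apply]
    refine Finset.sum_congr rfl fun k _ => ?_
    simp [Matrix.mul_diagonal, Matrix.star_apply]; ring
  have h1 : M i i = ∑ k, hH.eigenvalues k * (U i k) ^ 2 := by
    rw [← ent, ← hs]
  have h2 : ∑ j, M i j * M j i = ∑ k, hH.eigenvalues k * hH.eigenvalues k * (U i k) ^ 2 := by
    rw [← Matrix.mul_apply, hs2, ent]
  rw [h1, h2, Finset.mul_sum]
  refine Finset.sum_le_sum fun k _ => ?_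
  rcases (hM.eigenvalues_nonneg k).eq_or_lt with h0 | h0
  · rw [← h0]; simp
  · have : lambdaMinPos M ≤ hH.eigenvalues k := by
      refine posEig_ge M _ h0 (hH.eigenvectorBasis k) ?_ (hH.mulVec_eigenvectorBasis k)
      intro h
      have := hH.eigenvectorBasis.orthonormal.ne_zero k
      apply this; ext j; exact congrFun h j
    have h3 : 0 ≤ hH.eigenvalues k * (U i k) ^ 2 := by positivity
    nlinarith

theorem exists_posEig {m : Type*} [Fintype m] [DecidableEq m] (M : Matrix m m ℝ) (hM : M.PosSemidef)
    (h : M ≠ 0) : ∃ μ : ℝ, 0 < μ ∧ ∃ v : m → ℝ, v ≠ 0 ∧ M.mulVec v = μ • v := by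
  have hH := hM.isHermitian
  by_contra hc
  push Not at hc
  apply h
  rw [← hH.eigenvalues_eq_zero_iff]
  funext k
  by_contra hk
  refine hc (hH.eigenvalues k) (lt_of_le_of_ne (hM.eigenvalues_nonneg k) (Ne.symm hk)) (hH.eigenvectorBasis k) ?_ (hH.mulVec_eigenvectorBasis k)
  intro h
  have := hH.eigenvectorBasis.orthonormal.ne_zero k
  apply this; ext j; exact congrFun h j

theorem gram_psd (F : Finset (Finset ℕ)) : ((delta1 F)ᵀ * delta1 F).PosSemidef := by
  have := Matrix.posSemidef_conjTranspose_mul_self (delta1 F)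
  simpa using this

theorem triSign_cases (T e : Finset ℕ) :
    (e ⊆ T ∧ e.card = 2 ∧ T.card = 3 ∧ (triSign T e = 1 ∨ triSign T e = -1)) ∨
    (¬ (e ⊆ T ∧ e.card = 2 ∧ T.card = 3) ∧ triSign T e = 0) := by
  unfold triSign
  split_ifs <;> tauto

theorem edge_card {F : Finset (Finset ℕ)} {e : Finset ℕ} (he : e ∈ edgesOf F) : e.card = 2 := by
  simp only [edgesOf, mem_biUnion, mem_powersetCard] at he
  obtain ⟨T, _, _, h⟩ := he
  exact h

theorem gram_apply (F : Finset (Finset ℕ)) (e e' : {e // e ∈ edgesOf F}) :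
    ((delta1 F)ᵀ * delta1 F) e e' = ∑ T ∈ F, triSign T e * triSign T e' := by
  rw [Matrix.mul_apply]
  simp only [delta1, Matrix.transpose_apply, Matrix.of_apply]
  exact Finset.sum_coe_sort F (fun T => triSign T e.1 * triSign T e'.1)

theorem gram_diag (F : Finset (Finset ℕ)) (hF : IsTriFam F) (e : {e // e ∈ edgesOf F}) :
    ((delta1 F)ᵀ * delta1 F) e e = dg F e := by
  rw [gram_apply, dg, Finset.card_filter]
  push_cast
  refine Finset.sum_congr rfl fun T hT => ?_
  have h2 := edge_card e.2
  have h3 := hF.2 T hT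
  rcases triSign_cases T e with ⟨h, _, _, h' | h'⟩ | ⟨h, h'⟩
  · simp [h, h']
  · simp [h, h']
  · have : ¬ (e.1 ⊆ T) := fun h4 => h ⟨h4, h2, h3⟩
    simp [this, h']

theorem gram_off (F : Finset (Finset ℕ)) (hF : IsTriFam F) (e e' : {e // e ∈ edgesOf F})
    (hne : e ≠ e') :
    ((delta1 F)ᵀ * delta1 F) e e' * ((delta1 F)ᵀ * delta1 F) e' e ≤
      ((F.filter (fun T => e.1 ⊆ T ∧ e'.1 ⊆ T)).card : ℝ) := by
  have hs : ((delta1 F)ᵀ * delta1 F) e' e = ((delta1 F)ᵀ * delta1 F) e e' := by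
    rw [gram_apply, gram_apply]
    exact Finset.sum_congr rfl fun T _ => mul_comm _ _
  rw [hs]
  set c := (F.filter (fun T => e.1 ⊆ T ∧ e'.1 ⊆ T)).card with hc
  have hc1 : c ≤ 1 := by
    rw [hc, Finset.card_le_one]
    have key : ∀ T ∈ F, e.1 ⊆ T → e'.1 ⊆ T → T = e.1 ∪ e'.1 := by
      intro T hT h1 h2
      symm
      apply Finset.eq_of_subset_of_card_le (Finset.union_subset h1 h2)
      rw [hF.2 T hT]
      by_contra hlt
      have h5 : (e.1 ∪ e'.1).card ≤ 2 := by omega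
      have h6 : e.1 = e.1 ∪ e'.1 := Finset.eq_of_subset_of_card_le subset_union_left (by rw [edge_card e.2]; exact h5)
      have h7 : e'.1 = e.1 ∪ e'.1 := Finset.eq_of_subset_of_card_le subset_union_right (by rw [edge_card e'.2]; exact h5)
      exact hne (Subtype.ext (h6.trans h7.symm))
    intro a ha b hb
    simp only [mem_filter] at ha hb
    rw [key a ha.1 ha.2.1 ha.2.2, key b hb.1 hb.2.1 hb.2.2]
  have habs : |((delta1 F)ᵀ * delta1 F) e e'| ≤ c := by
    rw [gram_apply, hc, Finset.card_filter]
    push_cast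
    refine (Finset.abs_sum_le_sum_abs _ _).trans (Finset.sum_le_sum fun T hT => ?_)
    rcases triSign_cases T e with ⟨h, _, _, h' | h'⟩ | ⟨h, h'⟩ <;>
    rcases triSign_cases T e' with ⟨k, _, _, k' | k'⟩ | ⟨k, k'⟩ <;>
    simp [h', k'] <;> (try split_ifs) <;> simp_all
  have h0 := abs_nonneg (((delta1 F)ᵀ * delta1 F) e e')
  have hc1' : (c : ℝ) ≤ 1 := by exact_mod_cast hc1
  rw [← abs_mul_abs_self]
  nlinarith

theorem sum_off (F : Finset (Finset ℕ)) (hF : IsTriFam F) (e : Finset ℕ) (he : e ∈ edgesOf F) :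
    ∑ e' ∈ (edgesOf F).erase e, (F.filter (fun T => e ⊆ T ∧ e' ⊆ T)).card ≤ 2 * dg F e := by
  have : ∀ e' , (F.filter (fun T => e ⊆ T ∧ e' ⊆ T)).card =
      ((F.filter (fun T => e ⊆ T)).filter (fun T => e' ⊆ T)).card := by
    intro e'; rw [Finset.filter_filter]
  simp_rw [this]
  simp_rw [Finset.card_filter (fun T => _ ⊆ T) (F.filter (fun T => e ⊆ T))]
  rw [Finset.sum_comm]
  rw [dg, mul_comm, ← smul_eq_mul]
  apply Finset.sum_le_card_nsmul
  intro T hT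
  rw [mem_filter] at hT
  rw [← Finset.card_filter]
  calc _ ≤ ((T.powersetCard 2).erase e).card := by
        apply Finset.card_le_card
        intro x hx
        simp only [mem_filter, mem_erase, mem_powersetCard] at hx ⊢
        exact ⟨hx.1.1, hx.2, edge_card hx.1.2⟩
    _ = 2 := by
        rw [Finset.card_erase_of_mem (by simp [hT.2, edge_card he]), card_powersetCard, hF.2 T hT.1]
        rfl

theorem dg_pos (F : Finset (Finset ℕ)) (e : Finset ℕ) (he : e ∈ edgesOf F) : 0 < dg F e := by
  simp only [edgesOf, mem_biUnion, mem_powersetCard] at he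
  obtain ⟨T, h1, h2, h⟩ := he
  exact Finset.card_pos.2 ⟨T, by simp [h1, h2]⟩

/-- Main spectral bound. -/
theorem lam_le (F : Finset (Finset ℕ)) (hF : IsTriFam F) (e : Finset ℕ) (he : e ∈ edgesOf F) :
    lam F ≤ dg F e + 2 := by
  have h := psd_key _ (gram_psd F) ⟨e, he⟩
  rw [gram_diag F hF] at h
  have hsum : ∑ j, ((delta1 F)ᵀ * delta1 F) ⟨e, he⟩ j * ((delta1 F)ᵀ * delta1 F) j ⟨e, he⟩ ≤
      (dg F e : ℝ) * dg F e + 2 * dg F e := by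
    rw [← Finset.add_sum_erase _ _ (Finset.mem_univ (⟨e, he⟩ : {e // e ∈ edgesOf F})), gram_diag F hF]
    have h1 : ∑ j ∈ Finset.univ.erase (⟨e, he⟩ : {e // e ∈ edgesOf F}),
        ((delta1 F)ᵀ * delta1 F) ⟨e, he⟩ j * ((delta1 F)ᵀ * delta1 F) j ⟨e, he⟩ ≤
        ∑ j ∈ Finset.univ.erase (⟨e, he⟩ : {e // e ∈ edgesOf F}),
          ((F.filter (fun T => e ⊆ T ∧ j.1 ⊆ T)).card : ℝ) := by
      refine Finset.sum_le_sum fun j hj => ?_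
      exact gram_off F hF ⟨e, he⟩ j (Finset.ne_of_mem_erase hj).symm
    have h2 : ∑ j ∈ Finset.univ.erase (⟨e, he⟩ : {e // e ∈ edgesOf F}),
          (F.filter (fun T => e ⊆ T ∧ j.1 ⊆ T)).card =
        ∑ e' ∈ (edgesOf F).erase e, (F.filter (fun T => e ⊆ T ∧ e' ⊆ T)).card := by
      have a1 := Finset.add_sum_erase Finset.univ (fun j : {e // e ∈ edgesOf F} => (F.filter (fun T => e ⊆ T ∧ j.1 ⊆ T)).card) (Finset.mem_univ (⟨e, he⟩ : {e // e ∈ edgesOf F}))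
      have a2 := Finset.add_sum_erase (edgesOf F) (fun e' => (F.filter (fun T => e ⊆ T ∧ e' ⊆ T)).card) he
      have a3 := Finset.sum_coe_sort (edgesOf F) (fun e' => (F.filter (fun T => e ⊆ T ∧ e' ⊆ T)).card)
      simp only at a1 a2
      omega
    have h3 := sum_off F hF e he
    rw [← h2] at h3
    have h4 : (∑ j ∈ Finset.univ.erase (⟨e, he⟩ : {e // e ∈ edgesOf F}),
          ((F.filter (fun T => e ⊆ T ∧ j.1 ⊆ T)).card : ℝ)) ≤ 2 * dg F e := by exact_mod_cast h3
    linarith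
  have hp : (0 : ℝ) < dg F e := by exact_mod_cast dg_pos F e he
  have h5 : lambdaMinPos ((delta1 F)ᵀ * delta1 F) * (dg F e : ℝ) ≤ (dg F e + 2) * dg F e := by
    refine h.trans (hsum.trans (le_of_eq (by ring)))
  exact le_of_mul_le_mul_right h5 hp

theorem edges_nonempty (F : Finset (Finset ℕ)) (hF : IsTriFam F) : ∃ e, e ∈ edgesOf F := by
  obtain ⟨T, hT⟩ := hF.1
  have h3 := hF.2 T hT
  obtain ⟨e, he, hc⟩ := Finset.exists_subset_card_eq (show 2 ≤ T.card by omega)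
  exact ⟨e, by simp only [edgesOf, mem_biUnion, mem_powersetCard]; exact ⟨T, hT, he, hc⟩⟩

theorem phi_bdd (t : ℕ) :
    BddAbove {r : ℝ | ∃ F : Finset (Finset ℕ), IsTriFam F ∧ F.card = t ∧ lam F = r} := by
  refine ⟨t + 2, ?_⟩
  rintro r ⟨F, hF, hc, rfl⟩
  obtain ⟨e, he⟩ := edges_nonempty F hF
  refine (lam_le F hF e he).trans ?_
  have : dg F e ≤ t := hc ▸ Finset.card_filter_le _ _
  have : (dg F e : ℝ) ≤ t := by exact_mod_cast this
  linarith

theorem sum_dg (F : Finset (Finset ℕ)) (hF : IsTriFam F) : ∑ e ∈ edgesOf F, dg F e = 3 * F.card := by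
  simp_rw [dg, Finset.card_filter]
  rw [Finset.sum_comm, mul_comm, ← smul_eq_mul]
  apply Finset.sum_eq_card_nsmul
  intro T hT
  rw [← Finset.card_filter]
  have : (edgesOf F).filter (fun e => e ⊆ T) = T.powersetCard 2 := by
    ext e
    simp only [mem_filter, mem_powersetCard]
    constructor
    · rintro ⟨h1, h2⟩; exact ⟨h2, edge_card h1⟩
    · rintro ⟨h1, h2⟩
      refine ⟨?_, h1⟩
      simp only [edgesOf, mem_biUnion, mem_powersetCard]
      exact ⟨T, hT, h1, h2⟩
  rw [this, card_powersetCard, hF.2 T hT]; rfl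

theorem vdeg (F : Finset (Finset ℕ)) (hF : IsTriFam F) (k : ℕ) (hk : ∀ e ∈ edgesOf F, k ≤ dg F e)
    (v : ℕ) (hv : v ∈ vertsOf F) : k + 1 ≤ ((edgesOf F).filter (fun e => v ∈ e)).card := by
  simp only [vertsOf, mem_biUnion, id] at hv
  obtain ⟨T, hT, hvT⟩ := hv
  have h3 := hF.2 T hT
  obtain ⟨w, hw, hwv⟩ := Finset.exists_mem_ne (show 1 < T.card by omega) v
  have heE : ({v, w} : Finset ℕ) ∈ edgesOf F := by
    simp only [edgesOf, mem_biUnion, mem_powersetCard]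
    exact ⟨T, hT, by simp [insert_subset_iff, hvT, hw], Finset.card_pair hwv.symm⟩
  have hd := hk _ heE
  have himg : ((F.filter (fun T => ({v, w} : Finset ℕ) ⊆ T)).image (fun T => T.erase w)).card = dg F {v, w} := by
    rw [dg]
    apply Finset.card_image_of_injOn
    intro a ha b hb hab
    simp only [coe_filter, Set.mem_ofPred_eq, insert_subset_iff, singleton_subset_iff] at ha hb
    simp only at hab
    rw [← Finset.insert_erase ha.2.2, ← Finset.insert_erase hb.2.2, hab]
  have hnot : ({v, w} : Finset ℕ) ∉ (F.filter (fun T => ({v, w} : Finset ℕ) ⊆ T)).image (fun T => T.erase w) := by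
    intro h
    rw [mem_image] at h
    obtain ⟨a, _, h⟩ := h
    have : w ∈ a.erase w := by rw [h]; simp
    simp at this
  have hcard := Finset.card_insert_of_notMem hnot
  refine (show k + 1 ≤ _ by rw [hcard, himg]; omega : k + 1 ≤ (insert ({v, w} : Finset ℕ) ((F.filter (fun T => ({v, w} : Finset ℕ) ⊆ T)).image (fun T => T.erase w))).card).trans ?_
  apply Finset.card_le_card
  intro x hx
  rw [mem_insert, mem_image] at hx
  rw [mem_filter]
  rcases hx with rfl | ⟨S, hS, rfl⟩
  · exact ⟨heE, by simp⟩
  · simp only [mem_filter, insert_subset_iff, singleton_subset_iff] at hS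
    refine ⟨?_, by simp [hwv.symm, hS.2.1]⟩
    simp only [edgesOf, mem_biUnion, mem_powersetCard]
    exact ⟨S, hS.1, erase_subset _ _, by rw [Finset.card_erase_of_mem hS.2.2, hF.2 S hS.1]⟩

theorem sum_vdeg (F : Finset (Finset ℕ)) :
    ∑ v ∈ vertsOf F, ((edgesOf F).filter (fun e => v ∈ e)).card = 2 * (edgesOf F).card := by
  simp_rw [Finset.card_filter]
  rw [Finset.sum_comm, mul_comm, ← smul_eq_mul]
  apply Finset.sum_eq_card_nsmul
  intro e he
  rw [← Finset.card_filter, ← edge_card he]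
  congr 1
  ext v
  simp only [mem_filter, and_iff_right_iff_imp]
  intro hv
  simp only [edgesOf, mem_biUnion, mem_powersetCard] at he
  obtain ⟨T, hT, h, _⟩ := he
  simp only [vertsOf, mem_biUnion, id]
  exact ⟨T, hT, h hv⟩

theorem lower (n s : ℕ) (hn : 4 ≤ n) (hs : 1 ≤ s) (h : (n : ℝ) - 1 < phi (n.choose 3 + s)) :
    (n - 1) * (n - 2) ≤ 6 * s := by
  obtain ⟨k, rfl⟩ : ∃ k, n = k + 2 := ⟨n - 2, by omega⟩
  have hne : {r : ℝ | ∃ F : Finset (Finset ℕ), IsTriFam F ∧ F.card = (k+2).choose 3 + s ∧ lam F = r}.Nonempty := by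
    by_contra hne
    rw [Set.not_nonempty_iff_eq_empty] at hne
    rw [phi, hne, Real.sSup_empty] at h
    push_cast at h
    have : (0:ℝ) ≤ k := by positivity
    linarith
  obtain ⟨r, ⟨F, hF, hc, rfl⟩, hr⟩ := exists_lt_of_lt_csSup hne h
  have hk : ∀ e ∈ edgesOf F, k ≤ dg F e := by
    intro e he
    have := hr.trans_le (lam_le F hF e he)
    push_cast at this
    have : (k : ℝ) < dg F e + 1 := by linarith
    have : k < dg F e + 1 := by exact_mod_cast this
    omega
  have h1 : (edgesOf F).card * k ≤ 3 * F.card := by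
    rw [← sum_dg F hF, ← smul_eq_mul]
    exact Finset.card_nsmul_le_sum _ _ _ hk
  have h2 : (vertsOf F).card * (k + 1) ≤ 2 * (edgesOf F).card := by
    rw [← sum_vdeg F, ← smul_eq_mul]
    exact Finset.card_nsmul_le_sum _ _ _ (vdeg F hF k hk)
  have h3 : F.card ≤ (vertsOf F).card.choose 3 := by
    rw [← card_powersetCard]
    apply Finset.card_le_card
    intro T hT
    rw [mem_powersetCard]
    refine ⟨?_, hF.2 T hT⟩
    intro x hx
    simp only [vertsOf, mem_biUnion, id]
    exact ⟨T, hT, hx⟩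
  have h4 : k + 3 ≤ (vertsOf F).card := by
    by_contra hlt
    have := Nat.choose_le_choose 3 (show (vertsOf F).card ≤ k + 2 by omega)
    omega
  have h5 : 6 * (k + 2).choose 3 = (k + 2) * (k + 1) * k := by
    have := Nat.descFactorial_eq_factorial_mul_choose (k+2) 3
    simp [Nat.descFactorial, Nat.factorial] at this
    rw [← this]; ring
  have h6 : (k + 3) * (k + 1) * k ≤ 6 * F.card := by
    calc _ ≤ (vertsOf F).card * (k + 1) * k := by gcongr
      _ ≤ 2 * (edgesOf F).card * k := by gcongr
      _ ≤ _ := by nlinarith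
  rw [hc] at h6
  have : k + 2 - 1 = k + 1 := by omega
  rw [this, Nat.add_sub_cancel]
  nlinarith

theorem triSign_abc (a b c : ℕ) (hab : a < b) (hbc : b < c) :
    triSign {a, b, c} {a, b} = 1 ∧ triSign {a, b, c} {a, c} = -1 ∧ triSign {a, b, c} {b, c} = 1 := by
  have hac := hab.trans hbc
  have hc3 : ({a, b, c} : Finset ℕ).card = 3 := by
    rw [Finset.card_eq_three]; exact ⟨a, b, c, hab.ne, hac.ne, hbc.ne, rfl⟩
  have hmax : ({a, b, c} : Finset ℕ).max = WithBot.some c := by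
    rw [Finset.max_insert, Finset.max_insert, Finset.max_singleton,
      max_eq_right (WithBot.coe_le_coe.2 hbc.le), max_eq_right (WithBot.coe_le_coe.2 hac.le)]
  have hmin : ({a, b, c} : Finset ℕ).min = WithTop.some a := by
    rw [Finset.min_insert, Finset.min_insert, Finset.min_singleton,
      min_eq_left (WithTop.coe_le_coe.2 hbc.le), min_eq_left (WithTop.coe_le_coe.2 hab.le)]
  have d1 : ({a, b, c} : Finset ℕ) \ {a, b} = {c} := by
    ext t; simp only [mem_sdiff, mem_insert, mem_singleton]; omega
  have d2 : ({a, b, c} : Finset ℕ) \ {a, c} = {b} := by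
    ext t; simp only [mem_sdiff, mem_insert, mem_singleton]; omega
  have d3 : ({a, b, c} : Finset ℕ) \ {b, c} = {a} := by
    ext t; simp only [mem_sdiff, mem_insert, mem_singleton]; omega
  have s1 : ({a, b} : Finset ℕ) ⊆ {a, b, c} := by
    intro t; simp only [mem_insert, mem_singleton]; omega
  have s2 : ({a, c} : Finset ℕ) ⊆ {a, b, c} := by
    intro t; simp only [mem_insert, mem_singleton]; omega
  have s3 : ({b, c} : Finset ℕ) ⊆ {a, b, c} := by
    intro t; simp only [mem_insert, mem_singleton]; omega
  refine ⟨?_, ?_, ?_⟩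
  · rw [triSign, if_pos ⟨s1, Finset.card_pair hab.ne, hc3⟩, d1, hmax, if_pos]
    left; rfl
  · rw [triSign, if_pos ⟨s2, Finset.card_pair hac.ne, hc3⟩, d2, hmax, hmin, if_neg]
    rw [Finset.max_singleton, Finset.min_singleton]
    rintro (h | h)
    · exact hbc.ne (WithBot.coe_injective h)
    · exact hab.ne' (WithTop.coe_injective h)
  · rw [triSign, if_pos ⟨s3, Finset.card_pair hbc.ne, hc3⟩, d3, hmin, if_pos]
    right; rfl

theorem pairs_abc (a b c : ℕ) (hab : a < b) (hbc : b < c) (e : Finset ℕ) (h : e ⊆ {a, b, c})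
    (he : e.card = 2) : e = {a, b} ∨ e = {a, c} ∨ e = {b, c} := by
  obtain ⟨x, y, hxy, rfl⟩ := Finset.card_eq_two.1 he
  have hx : x ∈ ({a, b, c} : Finset ℕ) := h (by simp)
  have hy : y ∈ ({a, b, c} : Finset ℕ) := h (by simp)
  simp only [mem_insert, mem_singleton] at hx hy
  rcases hx with rfl | rfl | rfl <;> rcases hy with rfl | rfl | rfl <;>
    first
    | exact absurd rfl hxy
    | simp
    | (rw [Finset.pair_comm]; simp)

theorem row_abc (m : ℕ) (w : Finset ℕ → ℝ) (a b c : ℕ) (hab : a < b) (hbc : b < c) (hc : c < m) :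
    ∑ e ∈ (range m).powersetCard 2, triSign {a, b, c} e * w e = w {a, b} - w {a, c} + w {b, c} := by
  obtain ⟨t1, t2, t3⟩ := triSign_abc a b c hab hbc
  have n1 : ({a, b} : Finset ℕ) ≠ {a, c} := by
    intro h
    have : b ∈ ({a, c} : Finset ℕ) := by rw [← h]; simp
    simp only [mem_insert, mem_singleton] at this; omega
  have n2 : ({a, b} : Finset ℕ) ≠ {b, c} := by
    intro h
    have : a ∈ ({b, c} : Finset ℕ) := by rw [← h]; simp
    simp only [mem_insert, mem_singleton] at this; omega
  have n3 : ({a, c} : Finset ℕ) ≠ {b, c} := by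
    intro h
    have : a ∈ ({b, c} : Finset ℕ) := by rw [← h]; simp
    simp only [mem_insert, mem_singleton] at this; omega
  have hsub : ({{a, b}, {a, c}, {b, c}} : Finset (Finset ℕ)) ⊆ (range m).powersetCard 2 := by
    intro e he
    simp only [mem_insert, mem_singleton] at he
    rw [mem_powersetCard]
    rcases he with rfl | rfl | rfl
    · refine ⟨?_, Finset.card_pair hab.ne⟩
      intro t; simp only [mem_insert, mem_singleton, mem_range]; omega
    · refine ⟨?_, Finset.card_pair (hab.trans hbc).ne⟩
      intro t; simp only [mem_insert, mem_singleton, mem_range]; omega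
    · refine ⟨?_, Finset.card_pair hbc.ne⟩
      intro t; simp only [mem_insert, mem_singleton, mem_range]; omega
  rw [← Finset.sum_subset hsub]
  · rw [Finset.sum_insert (by simp [n1, n2]), Finset.sum_insert (by simp [n3]), Finset.sum_singleton,
      t1, t2, t3]
    ring
  · intro e _ he
    rcases triSign_cases {a, b, c} e with ⟨h, h2, _⟩ | ⟨_, h⟩
    · exfalso; apply he
      simpa using pairs_abc a b c hab hbc e h h2
    · rw [h, zero_mul]

/-- Antisymmetric extension of an edge function. -/
noncomputable def asym (w : Finset ℕ → ℝ) (x y : ℕ) : ℝ :=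
  if x < y then w {x, y} else if y < x then - w {x, y} else 0

theorem asym_swap (w : Finset ℕ → ℝ) (x y : ℕ) : asym w y x = - asym w x y := by
  unfold asym
  rw [Finset.pair_comm y x]
  split_ifs <;> first | omega | simp

theorem asym_lt (w : Finset ℕ → ℝ) {x y : ℕ} (h : x < y) : asym w x y = w {x, y} := if_pos h

theorem asym_self (w : Finset ℕ → ℝ) (x : ℕ) : asym w x x = 0 := by simp [asym]

theorem term_xyz (m : ℕ) (w : Finset ℕ → ℝ) (x y z : ℕ) (hxy : x < y) (hy : y < m) (hz : z < m)
    (hzx : z ≠ x) (hzy : z ≠ y) :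
    triSign (insert z {x, y}) {x, y} *
      ∑ e ∈ (range m).powersetCard 2, triSign (insert z {x, y}) e * w e =
    asym w x y + asym w y z + asym w z x := by
  rcases lt_or_gt_of_ne hzx with h | h
  · rw [row_abc m w z x y h hxy hy, (triSign_abc z x y h hxy).2.2, asym_swap w z y,
      asym_lt w hxy, asym_lt w h, asym_lt w (h.trans hxy)]
    ring
  · rcases lt_or_gt_of_ne hzy with k | k
    · have : (insert z {x, y} : Finset ℕ) = {x, z, y} := Finset.insert_comm _ _ _
      rw [this, row_abc m w x z y h k hy, (triSign_abc x z y h k).2.1, asym_swap w z y, asym_swap w x z,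
        asym_lt w hxy, asym_lt w h, asym_lt w k]
      ring
    · have : (insert z {x, y} : Finset ℕ) = {x, y, z} := by
        rw [Finset.insert_comm, Finset.pair_comm z y]
      rw [this, row_abc m w x y z hxy k hz, (triSign_abc x y z hxy k).1, asym_swap w x z,
        asym_lt w hxy, asym_lt w h, asym_lt w k]
      ring

theorem edgesOf_complete (m : ℕ) (hm : 3 ≤ m) :
    edgesOf ((range m).powersetCard 3) = (range m).powersetCard 2 := by
  ext e
  simp only [edgesOf, mem_biUnion, mem_powersetCard]
  constructor
  · rintro ⟨T, ⟨h1, _⟩, h2, h3⟩; exact ⟨h2.trans h1, h3⟩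
  · rintro ⟨h1, h2⟩
    obtain ⟨T, hT1, hT2, hT3⟩ := Finset.exists_subsuperset_card_eq h1 (show e.card ≤ 3 by omega)
      (by simpa using hm)
    exact ⟨T, ⟨hT2, hT3⟩, hT1, h2⟩

theorem gram_xy (m : ℕ) (w : Finset ℕ → ℝ) (x y : ℕ) (hxy : x < y) (hy : y < m) :
    ∑ T ∈ (range m).powersetCard 3, triSign T {x, y} *
      ∑ e ∈ (range m).powersetCard 2, triSign T e * w e =
    ∑ z ∈ range m, (asym w x y + asym w y z + asym w z x) := by
  set S := (range m) \ {x, y} with hS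
  have hS' : ∀ z, z ∈ S ↔ z < m ∧ z ≠ x ∧ z ≠ y := by
    intro z; simp [hS]
  have e1 : ∑ z ∈ S, (asym w x y + asym w y z + asym w z x) =
      ∑ z ∈ range m, (asym w x y + asym w y z + asym w z x) := by
    apply Finset.sum_subset sdiff_subset
    intro z hz hn
    rw [hS'] at hn
    have : z = x ∨ z = y := by
      rw [mem_range] at hz; by_contra hc; push Not at hc; exact hn ⟨hz, hc⟩
    rcases this with rfl | rfl
    · rw [asym_swap w z y, asym_self]; ring
    · rw [asym_swap w x z, asym_self]; ring
  rw [← e1]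
  have e2 : ∑ z ∈ S, (asym w x y + asym w y z + asym w z x) =
      ∑ z ∈ S, triSign (insert z {x, y}) {x, y} *
      ∑ e ∈ (range m).powersetCard 2, triSign (insert z {x, y}) e * w e := by
    refine Finset.sum_congr rfl fun z hz => ?_
    rw [hS'] at hz
    rw [term_xyz m w x y z hxy hy hz.1 hz.2.1 hz.2.2]
  rw [e2]
  have hinj : Set.InjOn (fun z => (insert z {x, y} : Finset ℕ)) S := by
    intro a ha b hb hab
    rw [mem_coe, hS'] at ha hb
    have : a ∈ (insert b {x, y} : Finset ℕ) := by
      have h2 : (insert a {x, y} : Finset ℕ) = insert b {x, y} := hab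
      rw [← h2]; simp
    simp only [mem_insert, mem_singleton] at this
    omega
  rw [← Finset.sum_image (f := fun T => triSign T {x, y} *
      ∑ e ∈ (range m).powersetCard 2, triSign T e * w e) hinj]
  symm
  apply Finset.sum_subset
  · intro T hT
    rw [mem_image] at hT
    obtain ⟨z, hz, rfl⟩ := hT
    rw [hS'] at hz
    rw [mem_powersetCard]
    refine ⟨?_, ?_⟩
    · intro t; simp only [mem_insert, mem_singleton, mem_range]; omega
    · rw [Finset.card_insert_of_notMem (by simp; omega), Finset.card_pair hxy.ne]
  · intro T hT hn
    rcases triSign_cases T {x, y} with ⟨h, _, h3, _⟩ | ⟨_, h⟩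
    · exfalso; apply hn
      have hc : (T \ {x, y}).card = 1 := by
        rw [Finset.card_sdiff_of_subset h, h3, Finset.card_pair hxy.ne]
      obtain ⟨z, hz⟩ := Finset.card_eq_one.1 hc
      have hzz : z ∈ T \ {x, y} := by rw [hz]; simp
      simp only [mem_sdiff, mem_insert, mem_singleton, not_or] at hzz
      rw [mem_image]
      rw [mem_powersetCard] at hT
      refine ⟨z, (hS' z).2 ⟨mem_range.1 (hT.1 hzz.1), hzz.2⟩, ?_⟩
      rw [← Finset.sdiff_union_of_subset h, hz]; rfl
    · rw [h, zero_mul]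

theorem eig_complete' (m : ℕ) (hm : 3 ≤ m) (μ : ℝ) (hμ : 0 < μ) (F : Finset (Finset ℕ))
    (hF : F = (range m).powersetCard 3) (v : {e // e ∈ edgesOf F} → ℝ) (hv : v ≠ 0)
    (h : ((delta1 F)ᵀ * delta1 F).mulVec v = μ • v) :
    μ = m := by
  classical
  have hE : edgesOf F = (range m).powersetCard 2 := by rw [hF]; exact edgesOf_complete m hm
  set w : Finset ℕ → ℝ := fun e => if h : e ∈ edgesOf F then v ⟨e, h⟩ else 0 with hw
  have hwv : ∀ e : {e // e ∈ edgesOf F}, w e.1 = v e := by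
    intro e; simp [hw]
  have key : ∀ e ∈ edgesOf F, ∑ T ∈ F, triSign T e * ∑ e' ∈ (range m).powersetCard 2, triSign T e' * w e' = μ * w e := by
    intro e he
    have h1 := congrFun h ⟨e, he⟩
    rw [← Matrix.mulVec_mulVec] at h1
    simp only [Pi.smul_apply, smul_eq_mul, ← hwv] at h1
    rw [← h1, ← hE]
    simp only [Matrix.mulVec, dotProduct, delta1, Matrix.transpose_apply, Matrix.of_apply, ← hwv]
    rw [← Finset.sum_coe_sort F]
    refine Finset.sum_congr rfl fun T _ => ?_
    congr 1
    exact (Finset.sum_coe_sort (edgesOf F) (fun e' => triSign T.1 e' * w e')).symm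
  set g := asym w with hg
  set H : ℕ → ℝ := fun x => ∑ z ∈ range m, g x z with hH
  have hswap : ∀ x y, g y x = - g x y := asym_swap w
  have rel0 : ∀ x y, x < y → y < m → μ * g x y = m * g x y + H y - H x := by
    intro x y hxy hy
    have hmem : ({x, y} : Finset ℕ) ∈ edgesOf F := by
      rw [hE, mem_powersetCard]
      refine ⟨?_, Finset.card_pair hxy.ne⟩
      intro t; simp only [mem_insert, mem_singleton, mem_range]; omega
    have h1 := key _ hmem
    rw [hF, gram_xy m w x y hxy hy] at h1
    have h2 : g x y = w {x, y} := asym_lt w hxy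
    rw [h2, ← h1, Finset.sum_add_distrib, Finset.sum_add_distrib, Finset.sum_const, card_range, nsmul_eq_mul]
    have h3 : ∑ z ∈ range m, asym w z x = - H x := by
      rw [hH, ← Finset.sum_neg_distrib]
      exact Finset.sum_congr rfl fun z _ => hswap x z
    rw [h3, ← hg, h2]; ring
  have rel : ∀ x y, x < m → y < m → μ * g x y = m * g x y + H y - H x := by
    intro x y hx hy
    rcases lt_trichotomy x y with h1 | rfl | h1
    · exact rel0 x y h1 hy
    · have : g x x = 0 := asym_self w x
      rw [this]; ring
    · have := rel0 y x h1 hx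
      rw [hswap y x]; linarith
  have tot : ∑ y ∈ range m, H y = 0 := by
    have h1 : ∑ y ∈ range m, H y = - ∑ y ∈ range m, H y := by
      calc ∑ y ∈ range m, H y = ∑ z ∈ range m, ∑ y ∈ range m, g y z := Finset.sum_comm
        _ = ∑ z ∈ range m, -H z := by
          refine Finset.sum_congr rfl fun z _ => ?_
          rw [hH, ← Finset.sum_neg_distrib]
          exact Finset.sum_congr rfl fun y _ => hswap z y
        _ = _ := Finset.sum_neg_distrib _
    linarith
  have H0 : ∀ x, x < m → H x = 0 := by
    intro x hx
    have h1 : ∑ y ∈ range m, μ * g x y = ∑ y ∈ range m, (m * g x y + H y - H x) :=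
      Finset.sum_congr rfl fun y hy => rel x y hx (mem_range.1 hy)
    rw [Finset.sum_sub_distrib, Finset.sum_add_distrib, ← Finset.mul_sum, ← Finset.mul_sum, tot,
      Finset.sum_const, card_range, nsmul_eq_mul] at h1
    have h2 : μ * H x = 0 := by
      change μ * H x = m * H x + 0 - m * H x at h1
      linarith
    rcases mul_eq_zero.1 h2 with h3 | h3
    · exact absurd h3 hμ.ne'
    · exact h3
  obtain ⟨e, he⟩ := Function.ne_iff.1 hv
  have hem : e.1 ⊆ range m ∧ e.1.card = 2 := mem_powersetCard.1 (hE ▸ e.2)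
  obtain ⟨x, y, hxy, hexy⟩ := Finset.card_eq_two.1 hem.2
  wlog hlt : x < y generalizing x y
  · exact this y x hxy.symm (by rw [hexy, Finset.pair_comm]) (by omega)
  have hy : y < m := mem_range.1 (hem.1 (by rw [hexy]; simp))
  have h1 := rel x y (hlt.trans hy) hy
  rw [H0 x (hlt.trans hy), H0 y hy] at h1
  have h2 : g x y ≠ 0 := by
    rw [hg, asym_lt w hlt, ← hexy, hwv]; exact he
  have h3 : (μ - m) * g x y = 0 := by linarith
  rcases mul_eq_zero.1 h3 with h4 | h4
  · linarith
  · exact absurd h4 h2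

theorem lam_complete_s14 (m : ℕ) (hm : 3 ≤ m) :
    IsTriFam ((range m).powersetCard 3) ∧ lam ((range m).powersetCard 3) = m := by
  have hF : IsTriFam ((range m).powersetCard 3) := by
    refine ⟨?_, fun T hT => (mem_powersetCard.1 hT).2⟩
    rw [Finset.powersetCard_nonempty]; simpa using hm
  refine ⟨hF, ?_⟩
  obtain ⟨e, he⟩ := edges_nonempty _ hF
  have hne : (delta1 ((range m).powersetCard 3))ᵀ * delta1 ((range m).powersetCard 3) ≠ 0 := by
    intro h0
    have h1 := gram_diag _ hF ⟨e, he⟩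
    rw [h0] at h1
    have h2 := dg_pos _ e he
    have h3 : (0 : ℝ) = dg ((range m).powersetCard 3) e := h1
    have : 0 = dg ((range m).powersetCard 3) e := by exact_mod_cast h3
    omega
  obtain ⟨μ, hμ, v, hv, h⟩ := exists_posEig _ (gram_psd _) hne
  have hset : {μ : ℝ | 0 < μ ∧ ∃ v : {e // e ∈ edgesOf ((range m).powersetCard 3)} → ℝ, v ≠ 0 ∧
      ((delta1 ((range m).powersetCard 3))ᵀ * delta1 ((range m).powersetCard 3)).mulVec v = μ • v} = {(m : ℝ)} := by
    ext r
    constructor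
    · rintro ⟨h1, u, hu, h2⟩
      exact eig_complete' m hm r h1 _ rfl u hu h2
    · rintro rfl
      have := eig_complete' m hm μ hμ _ rfl v hv h
      rw [this] at hμ h
      exact ⟨hμ, v, hv, h⟩
  rw [lam, lambdaMinPos, hset, csInf_singleton]

theorem upper_mem (n : ℕ) (hn : 4 ≤ n) :
    n.choose 2 ∈ {s : ℕ | 1 ≤ s ∧ (n : ℝ) - 1 < phi (n.choose 3 + s)} := by
  refine ⟨Nat.choose_pos (by omega), ?_⟩
  obtain ⟨h1, h2⟩ := lam_complete_s14 (n + 1) (by omega)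
  have : ((n + 1 : ℕ) : ℝ) ≤ phi (n.choose 3 + n.choose 2) := by
    apply le_csSup (phi_bdd _)
    refine ⟨_, h1, ?_, h2⟩
    rw [card_powersetCard, card_range, Nat.choose_succ_succ' n 2, add_comm]
  push_cast at this
  linarith

theorem Hfun_bounds (n : ℕ) (hn : 4 ≤ n) :
    ((n : ℝ) - 1) * (n - 2) ≤ 6 * Hfun n ∧ Hfun n ≤ n.choose 2 := by
  have hmem := Nat.sInf_mem ⟨_, upper_mem n hn⟩
  refine ⟨?_, Nat.sInf_le (upper_mem n hn)⟩
  have h := lower n (Hfun n) hn hmem.1 hmem.2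
  obtain ⟨k, rfl⟩ : ∃ k, n = k + 2 := ⟨n - 2, by omega⟩
  have e1 : k + 2 - 1 = k + 1 := by omega
  rw [e1, Nat.add_sub_cancel] at h
  have h' : ((k : ℝ) + 1) * k ≤ 6 * Hfun (k + 2) := by exact_mod_cast h
  push_cast
  linarith

/-- For all sufficiently large `n`, `n²/6 - 5n/(2√3) + 3 < H(n) ≤ C(n,2)`; in
particular `H(n) = Θ(C(n+1,3) - C(n,3)) = Θ(n²)`. -/
theorem stmt14 :
    (∃ N : ℕ, ∀ n : ℕ, N ≤ n →
      (n : ℝ) ^ 2 / 6 - 5 * (n : ℝ) / (2 * Real.sqrt 3) + 3 < (Hfun n : ℝ) ∧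
      Hfun n ≤ n.choose 2) ∧
    (∃ c₁ c₂ : ℝ, 0 < c₁ ∧ 0 < c₂ ∧ ∃ N : ℕ, ∀ n : ℕ, N ≤ n →
      c₁ * (((n + 1).choose 3 - n.choose 3 : ℕ) : ℝ) ≤ (Hfun n : ℝ) ∧
      (Hfun n : ℝ) ≤ c₂ * (((n + 1).choose 3 - n.choose 3 : ℕ) : ℝ)) ∧
    (∃ c₁ c₂ : ℝ, 0 < c₁ ∧ 0 < c₂ ∧ ∃ N : ℕ, ∀ n : ℕ, N ≤ n →
      c₁ * (n : ℝ) ^ 2 ≤ (Hfun n : ℝ) ∧ (Hfun n : ℝ) ≤ c₂ * (n : ℝ) ^ 2) := by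
  have hch : ∀ n : ℕ, ((n.choose 2 : ℕ) : ℝ) = n * (n - 1) / 2 := fun n => Nat.cast_choose_two ℝ n
  have hdiff : ∀ n : ℕ, (n + 1).choose 3 - n.choose 3 = n.choose 2 := by
    intro n
    rw [Nat.choose_succ_succ' n 2, Nat.add_sub_cancel]
  refine ⟨⟨4, fun n hn => ?_⟩, ⟨1 / 6, 1, by norm_num, by norm_num, 4, fun n hn => ?_⟩,
    ⟨1 / 24, 1, by norm_num, by norm_num, 4, fun n hn => ?_⟩⟩
  · obtain ⟨h1, h2⟩ := Hfun_bounds n hn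
    refine ⟨?_, h2⟩
    have hn' : (4 : ℝ) ≤ n := by exact_mod_cast hn
    have hs0 : 0 < Real.sqrt 3 := Real.sqrt_pos.2 (by norm_num)
    have hs : Real.sqrt 3 ≤ 2 := by
      rw [Real.sqrt_le_left (by norm_num)]; norm_num
    have h3 : 5 * (n : ℝ) / 4 ≤ 5 * (n : ℝ) / (2 * Real.sqrt 3) := by
      gcongr
      linarith
    nlinarith
  · obtain ⟨h1, h2⟩ := Hfun_bounds n hn
    have hn' : (4 : ℝ) ≤ n := by exact_mod_cast hn
    rw [hdiff]
    refine ⟨?_, by rw [one_mul]; exact_mod_cast h2⟩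
    rw [hch]
    nlinarith
  · obtain ⟨h1, h2⟩ := Hfun_bounds n hn
    have hn' : (4 : ℝ) ≤ n := by exact_mod_cast hn
    have h2' : (Hfun n : ℝ) ≤ (n.choose 2 : ℕ) := by exact_mod_cast h2
    rw [hch] at h2'
    constructor <;> nlinarith
end
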